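/- Suppose β ∈ (−1,0) and (n−1)(1−β) − 2mβ ≥ 0, and fix z ∈ (0, 𝔷_β). Then there exists a unique point a ∈ (𝔷_β, 𝔷_0) such that F(a;z) = 0; moreover F(x;z) < 0 for all x ∈ [max(z,K), a), F(x;z) > 0 for all x > a, and ∂F/∂x(x;z) > 0 for all x ≥ a. -/

import Mathlib

/-!
For `x > K` the factor `L x = (1 - m) x + m K` is positive, and the quotient `F(·;z) / L` is
strictly increasing on `[𝔷_β, ∞)`: its derivative has numerator
`F' L - F L' = A (n - m) x^(n-m-1) (x - K) ((n-1)(1-m) x + n m K)` (`wronskian_pos`).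
The last factor vanishes at the point `-n m K / ((n-1)(1-m))`, and the assumption
`0 ≤ (n-1)(1-β) - 2mβ` says precisely that this point is at most `𝔷_β`.

The sign of `F` at `𝔷_β` and to its left comes from the diagonal: `F(x;z) ≤ F(x;x)` for `z ≤ x`,
`K ≤ x`, because `B` is decreasing, and `F(x;x)` is a positive multiple of
`(n(1-β) - (1+β)) x - n K (1-β)`, which is negative exactly for `x < 𝔷_β` (`Ffun_neg`).
Since `F(𝔷_0;z) > 0`, the intermediate value theorem gives the zero `a`, and monotonicity of `F / L`
gives its uniqueness and the signs. For `x ≥ a` the numerator formula also yields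
`F' L > F L' ≥ 0`, so `F' > 0`.
-/

open Set Filter Topology

noncomputable section

/-- The coefficient `A`. -/
def Acoef (n m beta : ℝ) : ℝ := (n * (1 - beta) - m * (1 + beta)) / ((n - m) * (1 + beta))

/-- The coefficient `B(z)`. -/
def Bcoef (n m beta z : ℝ) : ℝ := 2 * n * beta * z ^ (n - m) / ((n - m) * (1 + beta))

/-- The minimal excessive function `ψ(·;z)` of the skew geometric Brownian motion. -/
def psi (n m beta z x : ℝ) : ℝ :=
  if x ≤ z then x ^ n else Acoef n m beta * x ^ n + Bcoef n m beta z * x ^ m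

/-- The function `F(·;z)`. -/
def Ffun (n m beta K z x : ℝ) : ℝ :=
  ((n - 1) * x - n * K) * Acoef n m beta * x ^ (n - m)
    + ((m - 1) * x - m * K) * Bcoef n m beta z

/-- The critical point `𝔷_c = rK/(r-b)`. -/
def zcrit (r b K : ℝ) : ℝ := r * K / (r - b)

/-- The critical point `𝔷_0 = nK/(n-1)`. -/
def zzero (n K : ℝ) : ℝ := n * K / (n - 1)

/-- The critical point `𝔷_β = nK/(n - (1+β)/(1-β))`. -/
def zbeta (n K beta : ℝ) : ℝ := n * K / (n - (1 + beta) / (1 - beta))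

/-- The constant `𝔠`. -/
def gothC (n m beta : ℝ) : ℝ :=
  (-((n - 1) * (n * (1 - beta) - m * (1 + beta))) / (2 * m * (m - 1) * beta)) ^ ((1 : ℝ) / (n - m))

/-- The function `J(·;z)`. -/
def Jfun (n m beta K z x : ℝ) : ℝ :=
  ((n - 1) * x - n * K) * Acoef n m beta * x ^ (-m)
    - ((m - 1) * x - m * K) * Acoef n m beta * z ^ (n - m) * x ^ (-n)
    - (n - m) * Acoef n m beta * (z - K) * z ^ (-m)

/-- The function `G(·,·;z)`. -/
def Gfun (n m K z x y : ℝ) : ℝ :=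
  ((n - 1) * y - n * K) * z ^ m * y ^ (-m) - ((m - 1) * y - m * K) * z ^ n * y ^ (-n)
    - ((n - 1) * x - n * K) * z ^ m * x ^ (-m) + ((m - 1) * x - m * K) * z ^ n * x ^ (-n)

/-- The function `H(·,·;z)`. -/
def Hfun (n m beta K z x y : ℝ) : ℝ :=
  y ^ (-n) * Ffun n m beta K z y
    - (1 - beta) / (1 + beta) * (((n - 1) * x - n * K) * x ^ (-m))

/-- The root `n` exceeds `1` because the characteristic quadratic is convex and negative at
both `0` and `1`. -/
lemma one_lt_root {sigma b r n : ℝ} (hr : 0 < r) (hbr : b < r) (hn : 0 < n)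
    (hnroot : 1 / 2 * sigma ^ 2 * n ^ 2 + (b - 1 / 2 * sigma ^ 2) * n - r = 0) : 1 < n := by
  by_contra! h
  nlinarith [mul_nonneg (mul_nonneg (sq_nonneg sigma) hn.le) (sub_nonneg.2 h),
    mul_pos hn (sub_pos.2 hbr), mul_nonneg hr.le (sub_nonneg.2 h)]

lemma zbeta_den_pos {n beta : ℝ} (hn : 1 < n) (hb : beta < 0) :
    0 < n * (1 - beta) - (1 + beta) := by nlinarith

lemma zbeta_eq {n K beta : ℝ} (hb : beta < 0) :
    zbeta n K beta = n * K * (1 - beta) / (n * (1 - beta) - (1 + beta)) := by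
  have h1 : (1 - beta) ≠ 0 := by linarith
  have h : n - (1 + beta) / (1 - beta) = (n * (1 - beta) - (1 + beta)) / (1 - beta) := by
    field_simp
  rw [zbeta, h, div_div_eq_mul_div]

lemma K_lt_zbeta {n K beta : ℝ} (hn : 1 < n) (hK : 0 < K) (hb1 : -1 < beta) (hb : beta < 0) :
    K < zbeta n K beta := by
  rw [zbeta_eq hb, lt_div_iff₀ (zbeta_den_pos hn hb)]
  nlinarith

lemma zbeta_lt_zzero {n K beta : ℝ} (hn : 1 < n) (hK : 0 < K) (hb : beta < 0) :
    zbeta n K beta < zzero n K := by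
  rw [zbeta_eq hb, zzero, div_lt_div_iff₀ (zbeta_den_pos hn hb) (by linarith)]
  have : 0 < n * K * (-2 * beta) := by
    have : 0 < n := by linarith
    have : 0 < -beta := by linarith
    nlinarith [mul_pos (mul_pos ‹0 < n› hK) this]
  nlinarith

lemma Acoef_pos {n m beta : ℝ} (hn : 1 < n) (hm : m < 0) (hb1 : -1 < beta) (hb : beta < 0) :
    0 < Acoef n m beta := by
  refine div_pos ?_ (mul_pos (by linarith) (by linarith))
  nlinarith [mul_pos (show 0 < n by linarith) (show 0 < 1 - beta by linarith),
    mul_pos (neg_pos.2 hm) (show 0 < 1 + beta by linarith)]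

/-- For `β < 0` the coefficient `B` is strictly decreasing in the position of the skew point. -/
lemma Bcoef_strictAnti {n m beta z x : ℝ} (hn : 1 < n) (hm : m < 0) (hb1 : -1 < beta)
    (hb : beta < 0) (hz : 0 < z) (hzx : z < x) : Bcoef n m beta x < Bcoef n m beta z := by
  have hp : z ^ (n - m) < x ^ (n - m) := Real.rpow_lt_rpow hz.le hzx (by linarith)
  refine div_lt_div_of_pos_right ?_ (mul_pos (by linarith) (by linarith))
  exact mul_lt_mul_of_neg_left hp (by nlinarith)

lemma Bcoef_neg {n m beta z : ℝ} (hn : 1 < n) (hm : m < 0) (hb1 : -1 < beta)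
    (hb : beta < 0) (hz : 0 < z) : Bcoef n m beta z < 0 := by
  have hp : 0 < z ^ (n - m) := Real.rpow_pos_of_pos hz _
  refine div_neg_of_neg_of_pos ?_ (mul_pos (by linarith) (by linarith))
  exact mul_neg_of_neg_of_pos (by nlinarith) hp

/-- The value of `F(x;z)` on the diagonal `z = x`. -/
lemma Ffun_diag {n m beta K x : ℝ} (hn : 1 < n) (hm : m < 0) (hb1 : -1 < beta) :
    Ffun n m beta K x x = x ^ (n - m) / (1 + beta) *
      ((n * (1 - beta) - (1 + beta)) * x - n * K * (1 - beta)) := by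
  have h1 : n - m ≠ 0 := by linarith
  have h2 : 1 + beta ≠ 0 := by linarith
  unfold Ffun Acoef Bcoef
  generalize x ^ (n - m) = X
  field_simp
  ring

lemma Ffun_neg {n m beta K z x : ℝ} (hn : 1 < n) (hm : m < 0) (hb1 : -1 < beta) (hb : beta < 0)
    (hK : 0 < K) (hz : 0 < z) (hzb : z < zbeta n K beta) (hKx : K ≤ x) (hzx : z ≤ x)
    (hx : x ≤ zbeta n K beta) : Ffun n m beta K z x < 0 := by
  have hW := zbeta_den_pos hn hb
  have hc : 0 < x ^ (n - m) / (1 + beta) :=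
    div_pos (Real.rpow_pos_of_pos (by linarith) _) (by linarith)
  have hL : (m - 1) * x - m * K < 0 := by nlinarith
  have hdiff : Ffun n m beta K z x = Ffun n m beta K x x
      + ((m - 1) * x - m * K) * (Bcoef n m beta z - Bcoef n m beta x) := by
    unfold Ffun; ring
  rw [hdiff, Ffun_diag hn hm hb1]
  rcases hzx.eq_or_lt with rfl | hlt
  · rw [zbeta_eq hb, lt_div_iff₀ hW] at hzb
    have : z ^ (n - m) / (1 + beta) *
      ((n * (1 - beta) - (1 + beta)) * z - n * K * (1 - beta)) < 0 :=
      mul_neg_of_pos_of_neg hc (by linarith)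
    simpa using this
  · rw [zbeta_eq hb, le_div_iff₀ hW] at hx
    have h1 := mul_nonpos_of_nonneg_of_nonpos hc.le
      (show (n * (1 - beta) - (1 + beta)) * x - n * K * (1 - beta) ≤ 0 by linarith)
    have h2 := mul_neg_of_neg_of_pos hL
      (sub_pos.2 (Bcoef_strictAnti hn hm hb1 hb hz hlt))
    linarith

/-- The derivative of `F(·;z)`. -/
def Fder (n m beta K z x : ℝ) : ℝ :=
  (n - 1) * Acoef n m beta * x ^ (n - m)
    + ((n - 1) * x - n * K) * Acoef n m beta * ((n - m) * x ^ (n - m - 1))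
    + (m - 1) * Bcoef n m beta z

lemma hasDerivAt_Ffun {n m beta K z x : ℝ} (hx : 0 < x) :
    HasDerivAt (Ffun n m beta K z) (Fder n m beta K z x) x := by
  have h1 : HasDerivAt (fun x : ℝ => ((n - 1) * x - n * K) * Acoef n m beta)
      ((n - 1) * Acoef n m beta) x := by
    simpa using (((hasDerivAt_id x).const_mul (n - 1)).sub_const (n * K)).mul_const (Acoef n m beta)
  have h2 : HasDerivAt (fun x : ℝ => ((m - 1) * x - m * K) * Bcoef n m beta z)
      ((m - 1) * Bcoef n m beta z) x := by
    simpa using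
      (((hasDerivAt_id x).const_mul (m - 1)).sub_const (m * K)).mul_const (Bcoef n m beta z)
  exact (h1.mul (Real.hasDerivAt_rpow_const (p := n - m) (Or.inl hx.ne'))).add h2

/-- The numerator of the derivative of `F / L`, with `L x = (1 - m) x + m K`, is positive beyond
`𝔷_β`; the term in `B` cancels because it is a constant multiple of `L`. -/
lemma wronskian_pos {n m beta K z x : ℝ} (hn : 1 < n) (hm : m < 0) (hb1 : -1 < beta)
    (hb : beta < 0) (hK : 0 < K) (hconv : 0 ≤ (n - 1) * (1 - beta) - 2 * m * beta)
    (hx : zbeta n K beta < x) :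
    0 < Fder n m beta K z x * ((1 - m) * x + m * K) - Ffun n m beta K z x * (1 - m) := by
  have hKx : K < x := (K_lt_zbeta hn hK hb1 hb).trans hx
  have hx0 : 0 < x := hK.trans hKx
  have hW := zbeta_den_pos hn hb
  have hq : 0 < (n - 1) * (1 - m) * x + n * m * K := by
    rw [zbeta_eq hb, div_lt_iff₀ hW] at hx
    have h1 : 0 < (n - 1) * (1 - m) := mul_pos (by linarith) (by linarith)
    have h2 := mul_lt_mul_of_pos_left hx h1
    have h3 : 0 ≤ n * K * ((n - 1) * (1 - beta) - 2 * m * beta) :=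
      mul_nonneg (mul_nonneg (by linarith) hK.le) hconv
    refine pos_of_mul_pos_left (b := n * (1 - beta) - (1 + beta)) ?_ hW.le
    nlinarith
  have hpow : x ^ (n - m) = x ^ (n - m - 1) * x := by
    rw [← Real.rpow_add_one hx0.ne']; congr 1; ring
  have key : Fder n m beta K z x * ((1 - m) * x + m * K) - Ffun n m beta K z x * (1 - m)
      = Acoef n m beta * (n - m) * x ^ (n - m - 1) * (x - K)
        * ((n - 1) * (1 - m) * x + n * m * K) := by
    unfold Fder Ffun
    rw [hpow]
    ring
  rw [key]
  have := Acoef_pos hn hm hb1 hb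
  have := Real.rpow_pos_of_pos hx0 (n - m - 1)
  have : 0 < n - m := by linarith
  have : 0 < x - K := by linarith
  positivity

lemma strictMonoOn_quotient {n m beta K z : ℝ} (hn : 1 < n) (hm : m < 0) (hb1 : -1 < beta)
    (hb : beta < 0) (hK : 0 < K) (hconv : 0 ≤ (n - 1) * (1 - beta) - 2 * m * beta) :
    StrictMonoOn (fun x => Ffun n m beta K z x / ((1 - m) * x + m * K))
      (Ici (zbeta n K beta)) := by
  have hKb := K_lt_zbeta hn hK hb1 hb
  have hd : ∀ x, zbeta n K beta ≤ x →
      HasDerivAt (fun x => Ffun n m beta K z x / ((1 - m) * x + m * K))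
        ((Fder n m beta K z x * ((1 - m) * x + m * K) - Ffun n m beta K z x * (1 - m))
          / ((1 - m) * x + m * K) ^ 2) x := by
    intro x hx
    have hL : HasDerivAt (fun x : ℝ => (1 - m) * x + m * K) (1 - m) x := by
      simpa using ((hasDerivAt_id x).const_mul (1 - m)).add_const (m * K)
    exact (hasDerivAt_Ffun (by linarith)).div hL (by nlinarith)
  refine strictMonoOn_of_deriv_pos (convex_Ici _)
    (fun x hx => (hd x hx).continuousAt.continuousWithinAt) fun x hx => ?_
  rw [interior_Ici] at hx
  have hx' : zbeta n K beta < x := hx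
  rw [(hd x hx'.le).deriv]
  have : 0 < (1 - m) * x + m * K := by nlinarith
  exact div_pos (wronskian_pos hn hm hb1 hb hK hconv hx') (by positivity)

theorem stmt_10 (sigma b r K beta z n m : ℝ)
    (hsigma : sigma ≠ 0) (hr : 0 < r) (hbr : b < r) (hK : 0 < K)
    (hb1 : -1 < beta) (hb2 : beta < 1) (hbne : beta ≠ 0) (hz : 0 < z)
    (hm : m < 0) (hn : 0 < n)
    (hmroot : 1 / 2 * sigma ^ 2 * m ^ 2 + (b - 1 / 2 * sigma ^ 2) * m - r = 0)
    (hnroot : 1 / 2 * sigma ^ 2 * n ^ 2 + (b - 1 / 2 * sigma ^ 2) * n - r = 0)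
    (hbneg : beta < 0)
    (hconv : 0 ≤ (n - 1) * (1 - beta) - 2 * m * beta)
    (hzlt : z < zbeta n K beta) :
    ∃ a ∈ Set.Ioo (zbeta n K beta) (zzero n K),
      Ffun n m beta K z a = 0 ∧
      (∀ a' ∈ Set.Ioo (zbeta n K beta) (zzero n K), Ffun n m beta K z a' = 0 → a' = a) ∧
      (∀ x, max z K ≤ x → x < a → Ffun n m beta K z x < 0) ∧
      (∀ x, a < x → 0 < Ffun n m beta K z x) ∧
      (∀ x, a ≤ x → 0 < deriv (Ffun n m beta K z) x) := by
  have hn1 := one_lt_root hr hbr hn hnroot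
  have hKb := K_lt_zbeta hn1 hK hb1 hbneg
  have hb0 := zbeta_lt_zzero hn1 hK hbneg
  have hL : ∀ x, K ≤ x → 0 < (1 - m) * x + m * K := fun x hx => by nlinarith
  have hmono := strictMonoOn_quotient (z := z) hn1 hm hb1 hbneg hK hconv
  have hFb : Ffun n m beta K z (zbeta n K beta) < 0 :=
    Ffun_neg hn1 hm hb1 hbneg hK hz hzlt hKb.le hzlt.le le_rfl
  have hF0 : 0 < Ffun n m beta K z (zzero n K) := by
    have h1 : (n - 1) * zzero n K - n * K = 0 := by
      have : n - 1 ≠ 0 := by linarith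
      unfold zzero
      field_simp
      ring
    have h2 := mul_pos_of_neg_of_neg
      (show (m - 1) * zzero n K - m * K < 0 by linarith [hL _ (hKb.trans hb0).le])
      (Bcoef_neg hn1 hm hb1 hbneg hz)
    unfold Ffun
    rw [h1]
    linarith
  obtain ⟨a, ha, hFa⟩ := intermediate_value_Ioo hb0.le
    (fun x hx => (hasDerivAt_Ffun (z := z) (n := n) (m := m) (beta := beta) (K := K)
      (hK.trans (hKb.trans_le hx.1))).continuousAt.continuousWithinAt) ⟨hFb, hF0⟩
  have hneg : ∀ x, zbeta n K beta ≤ x → x < a → Ffun n m beta K z x < 0 := by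
    intro x hx hxa
    have h := hmono hx ha.1.le hxa
    simp only [hFa, zero_div] at h
    exact by
      have hLx := hL x (hKb.le.trans hx)
      rwa [div_lt_iff₀ hLx, zero_mul] at h
  have hpos : ∀ x, a < x → 0 < Ffun n m beta K z x := by
    intro x hx
    have h := hmono ha.1.le (ha.1.trans hx).le hx
    simp only [hFa, zero_div] at h
    exact (div_pos_iff_of_pos_right (hL x (hKb.trans (ha.1.trans hx)).le)).1 h
  refine ⟨a, ha, hFa, ?_, ?_, hpos, ?_⟩
  · intro a' ha' hFa'
    rcases lt_trichotomy a' a with h | h | h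
    · exact absurd hFa' (hneg a' ha'.1.le h).ne
    · exact h
    · exact absurd hFa' (hpos a' h).ne'
  · intro x hx hxa
    rcases le_total x (zbeta n K beta) with h | h
    · exact Ffun_neg hn1 hm hb1 hbneg hK hz hzlt ((le_max_right _ _).trans hx)
        ((le_max_left _ _).trans hx) h
    · exact hneg x h hxa
  · intro x hx
    have hbx : zbeta n K beta < x := ha.1.trans_le hx
    have hFx : 0 ≤ Ffun n m beta K z x := by
      rcases hx.eq_or_lt with rfl | h
      · exact hFa.ge
      · exact (hpos x h).le
    rw [(hasDerivAt_Ffun (hK.trans (hKb.trans hbx))).deriv]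
    have hw := wronskian_pos (z := z) hn1 hm hb1 hbneg hK hconv hbx
    have h1 : 0 ≤ Ffun n m beta K z x * (1 - m) := mul_nonneg hFx (by linarith)
    exact pos_of_mul_pos_left (b := (1 - m) * x + m * K) (by linarith) (hL x (hKb.trans hbx).le).le
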